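/- For every k ≥ 2 and every integer ℓ ≥ 2, there exists a k-typed Schelling game with n = kℓ agents and exactly ℓ agents of each type (some strategic, some stubborn), whose topology is a star with n+1 nodes, which admits an equilibrium assignment with social welfare strictly less than 1/k and also admits an assignment with social welfare strictly greater than ℓ − 1; consequently its price of anarchy is at least k(ℓ−1) = n − k. -/

import Mathlib

/-- A (social) Schelling game: agents `A`, of which `strategic` are the strategic
ones (the rest being stubborn), a social network `net` on the agents (the friends
of an agent are her neighbors in `net`, all other agents are her enemies), a
topology `top` on the set of locations `V`, and the preferred locations `loc`
of the (stubborn) agents. -/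
structure SchellingGame (A V : Type) where
  strategic : Finset A
  net : SimpleGraph A
  top : SimpleGraph V
  loc : A → V

namespace SchellingGame

variable {A V : Type} [Fintype A] [DecidableEq A] [Fintype V] [DecidableEq V]

/-- There are `n ≥ 2` agents, strictly more locations than agents, and the
stubborn agents have pairwise distinct preferred locations. -/
def WellFormed (g : SchellingGame A V) : Prop :=
  2 ≤ Fintype.card A ∧ Fintype.card A < Fintype.card V ∧
    Set.InjOn g.loc ↑(g.strategicᶜ)

/-- An assignment is an injective placement of the agents on the nodes of the
topology which places every stubborn agent at her preferred location. -/
def IsAssignment (g : SchellingGame A V) (v : A → V) : Prop :=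
  Function.Injective v ∧ ∀ i ∉ g.strategic, v i = g.loc i

/-- The number of friends of `i` occupying nodes adjacent to `v i`. -/
noncomputable def fcount (g : SchellingGame A V) (v : A → V) (i : A) : ℕ :=
  Nat.card {j : A // g.net.Adj i j ∧ g.top.Adj (v i) (v j)}

/-- The number of enemies of `i` occupying nodes adjacent to `v i`. -/
noncomputable def ecount (g : SchellingGame A V) (v : A → V) (i : A) : ℕ :=
  Nat.card {j : A // j ≠ i ∧ ¬ g.net.Adj i j ∧ g.top.Adj (v i) (v j)}

/-- The utility of agent `i` under assignment `v`: `0` if `i` has no adjacent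
friends, and otherwise the fraction of friends among her occupied neighbors. -/
noncomputable def util (g : SchellingGame A V) (v : A → V) (i : A) : ℚ :=
  if g.fcount v i = 0 then 0
  else (g.fcount v i : ℚ) / ((g.fcount v i : ℚ) + (g.ecount v i : ℚ))

/-- An assignment is an equilibrium if no strategic agent can strictly increase
her utility by relocating to an unoccupied node. -/
def IsEquilibrium (g : SchellingGame A V) (v : A → V) : Prop :=
  g.IsAssignment v ∧ ∀ i ∈ g.strategic, ∀ z : V, (∀ j : A, v j ≠ z) →
    g.util (Function.update v i z) i ≤ g.util v i

/-- The social welfare: the total utility of the strategic agents. -/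
noncomputable def SW (g : SchellingGame A V) (v : A → V) : ℚ :=
  ∑ i ∈ g.strategic, g.util v i

/-- `g` is a `k`-typed Schelling game with type map `typ`: two distinct agents are
friends iff they have the same type, and every type is nonempty. -/
def IsTypedGame (g : SchellingGame A V) (k : ℕ) (typ : A → Fin k) : Prop :=
  (∀ i j : A, g.net.Adj i j ↔ (i ≠ j ∧ typ i = typ j)) ∧ ∀ c : Fin k, ∃ i : A, typ i = c

end SchellingGame

/-- A star graph: one center node adjacent to all other nodes, and no other edges. -/
def IsStar {V : Type} (G : SimpleGraph V) : Prop :=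
  ∃ c : V, ∀ a b : V, G.Adj a b ↔ (a ≠ b ∧ (a = c ∨ b = c))

open Classical in
/-- the star game -/
noncomputable def gm (k l : ℕ) (typ : Fin (k * l) → Fin k) (st : Finset (Fin (k * l))) :
    SchellingGame (Fin (k * l)) (Fin (k * l + 1)) where
  strategic := st
  net := ⟨fun i j => i ≠ j ∧ typ i = typ j, ⟨fun i j h => ⟨h.1.symm, h.2.symm⟩⟩, ⟨fun i h => h.1 rfl⟩⟩
  top := ⟨fun a b => a ≠ b ∧ (a = 0 ∨ b = 0), ⟨fun i j h => ⟨h.1.symm, h.2.symm⟩⟩, ⟨fun i h => h.1 rfl⟩⟩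
  loc := Fin.succ

theorem util_nonneg' {A V : Type} (g : SchellingGame A V) (v : A → V) (i : A) :
    0 ≤ g.util v i := by
  unfold SchellingGame.util
  split_ifs
  · exact le_rfl
  · positivity

theorem util_zero {k l : ℕ} (typ : Fin (k * l) → Fin k) (st : Finset (Fin (k * l)))
    (v : Fin (k * l) → Fin (k * l + 1)) (i : Fin (k * l)) (hi : v i ≠ 0)
    (h : ∀ j, v j = 0 → typ i ≠ typ j) : (gm k l typ st).util v i = 0 := by
  unfold SchellingGame.util
  rw [if_pos]
  unfold SchellingGame.fcount
  have : IsEmpty {j // (gm k l typ st).net.Adj i j ∧ (gm k l typ st).top.Adj (v i) (v j)} := by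
    constructor
    rintro ⟨j, h1, h2⟩
    rcases h2.2 with h3 | h3
    · exact hi h3
    · exact h j h3 h1.2
  exact Nat.card_of_isEmpty

theorem util_one {k l : ℕ} (typ : Fin (k * l) → Fin k) (st : Finset (Fin (k * l)))
    (v : Fin (k * l) → Fin (k * l + 1)) (i x : Fin (k * l)) (hx : ∀ j, v j = 0 ↔ j = x)
    (hi : i ≠ x) (h : typ i = typ x) : (gm k l typ st).util v i = 1 := by
  have hi0 : v i ≠ 0 := fun e => hi ((hx i).1 e)
  have e0 : (gm k l typ st).ecount v i = 0 := by
    unfold SchellingGame.ecount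
    have : IsEmpty {j // j ≠ i ∧ ¬ (gm k l typ st).net.Adj i j ∧
        (gm k l typ st).top.Adj (v i) (v j)} := by
      constructor
      rintro ⟨j, h1, h2, h3⟩
      rcases h3.2 with h4 | h4
      · exact hi0 h4
      · have := (hx j).1 h4
        subst this
        exact h2 ⟨hi, h⟩
    exact Nat.card_of_isEmpty
  have f0 : (gm k l typ st).fcount v i ≠ 0 := by
    unfold SchellingGame.fcount
    have : Nonempty {j // (gm k l typ st).net.Adj i j ∧
        (gm k l typ st).top.Adj (v i) (v j)} := by
      refine ⟨x, ⟨hi, h⟩, ?_, Or.inr ((hx x).2 rfl)⟩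
      rw [(hx x).2 rfl]; exact hi0
    exact Nat.card_pos.ne'
  unfold SchellingGame.util
  rw [if_neg f0, e0]
  have : ((gm k l typ st).fcount v i : ℚ) ≠ 0 := by exact_mod_cast f0
  field_simp
  simp

theorem util_center {k l : ℕ} (hl : 2 ≤ l) (typ : Fin (k * l) → Fin k) (st : Finset (Fin (k * l)))
    (hc : ∀ c : Fin k, Nat.card {i // typ i = c} = l)
    (v : Fin (k * l) → Fin (k * l + 1)) (x : Fin (k * l)) (hx : ∀ j, v j = 0 ↔ j = x) :
    (gm k l typ st).util v x = ((l : ℚ) - 1) / ((k : ℚ) * l - 1) := by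
  classical
  have hA : ∀ j, (gm k l typ st).top.Adj (v x) (v j) ↔ j ≠ x := by
    intro j
    have h0 := (hx x).2 rfl
    constructor
    · rintro h rfl
      exact h.1 rfl
    · intro h
      refine ⟨fun e => h ((hx j).1 (e ▸ h0)), Or.inl h0⟩
  have hf : (gm k l typ st).fcount v x = l - 1 := by
    unfold SchellingGame.fcount
    rw [Nat.card_eq_fintype_card, Fintype.card_subtype]
    have h1 := hc (typ x)
    rw [Nat.card_eq_fintype_card, Fintype.card_subtype] at h1
    refine Eq.trans ?_ (congrArg (· - 1) h1)
    beta_reduce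
    rw [← Finset.card_erase_of_mem (a := x) (by simp)]
    congr 1
    ext j
    simp only [Finset.mem_filter, Finset.mem_univ, true_and, Finset.mem_erase, hA]
    constructor
    · rintro ⟨h, h'⟩
      exact ⟨h', h.2.symm⟩
    · rintro ⟨h, h'⟩
      exact ⟨⟨h.symm, h'.symm⟩, h⟩
  have he : (gm k l typ st).fcount v x + (gm k l typ st).ecount v x = k * l - 1 := by
    unfold SchellingGame.fcount SchellingGame.ecount
    rw [Nat.card_eq_fintype_card, Fintype.card_subtype, Nat.card_eq_fintype_card,
      Fintype.card_subtype, ← Finset.card_union_of_disjoint]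
    · have : (Finset.univ.erase x).card = k * l - 1 := by
        rw [Finset.card_erase_of_mem (by simp)]; simp
      rw [← this]
      congr 1
      ext j
      simp only [Finset.mem_filter, Finset.mem_univ, true_and, Finset.mem_erase, hA,
        Finset.mem_union]
      tauto
    · rw [Finset.disjoint_left]
      intro j h1 h2
      simp only [Finset.mem_filter, Finset.mem_univ, true_and] at h1 h2
      exact h2.2.1 h1.1
  unfold SchellingGame.util
  rw [if_neg (by omega), ← Nat.cast_add, he, hf]
  have : 1 ≤ k * l := by have := x.2; omega
  rw [Nat.cast_sub this, Nat.cast_sub (by omega)]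
  push_cast
  rfl

/-- everyone at own leaf, except x at the center -/
def cfg {n : ℕ} (x : Fin n) : Fin n → Fin (n + 1) := Function.update Fin.succ x 0

theorem cfg_zero {n : ℕ} (x j : Fin n) : cfg x j = 0 ↔ j = x := by
  unfold cfg
  by_cases h : j = x
  · subst h; simp
  · simp [h, Fin.succ_ne_zero]

theorem cfg_inj {n : ℕ} (x : Fin n) : Function.Injective (cfg x) := by
  intro i j h
  by_cases hi : i = x
  · have := (cfg_zero x i).2 hi
    rw [h] at this
    rw [hi, (cfg_zero x j).1 this]
  · have hj : j ≠ x := by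
      rintro rfl
      exact hi ((cfg_zero j i).1 (h.trans ((cfg_zero j j).2 rfl)))
    simpa [cfg, hi, hj] using h

/-- for all k ≥ 2 and ℓ ≥ 2 there is a k-typed Schelling game with
n = kℓ agents, exactly ℓ agents per type (some strategic, some stubborn), and a star
topology with n+1 nodes, admitting an equilibrium of social welfare < 1/k and an
assignment of social welfare > ℓ - 1; hence its price of anarchy is at least
k(ℓ-1) = n - k. -/
theorem stmt13 (k l : ℕ) (hk : 2 ≤ k) (hl : 2 ≤ l) :
    ∃ (g : SchellingGame (Fin (k * l)) (Fin (k * l + 1))) (typ : Fin (k * l) → Fin k),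
      g.WellFormed ∧ g.IsTypedGame k typ ∧
      (∀ c : Fin k, Nat.card {i // typ i = c} = l) ∧
      g.strategic.Nonempty ∧ g.strategic ≠ Finset.univ ∧
      IsStar g.top ∧
      (∃ v w, g.IsEquilibrium v ∧ g.SW v < 1 / (k : ℚ) ∧
        g.IsAssignment w ∧ (l : ℚ) - 1 < g.SW w ∧
        ((k * (l - 1) : ℕ) : ℚ) * g.SW v ≤ g.SW w) := by
  classical
  set typ : Fin (k * l) → Fin k := fun i => (finProdFinEquiv.symm i).1 with htyp
  have hty : ∀ c y, typ (finProdFinEquiv (c, y)) = c := fun c y => by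
    rw [htyp]; beta_reduce; rw [Equiv.symm_apply_apply]
  have hc : ∀ c : Fin k, Nat.card {i // typ i = c} = l := by
    intro c
    refine (Nat.card_congr (?_ : _ ≃ Fin l)).trans (Nat.card_fin l)
    refine ⟨fun i => (finProdFinEquiv.symm i.1).2,
      fun y => ⟨finProdFinEquiv (c, y), hty c y⟩, ?_, ?_⟩
    · rintro ⟨i, rfl⟩
      apply Subtype.ext
      exact finProdFinEquiv.apply_symm_apply i
    · intro y
      change (finProdFinEquiv.symm (finProdFinEquiv (c, y))).2 = y
      rw [Equiv.symm_apply_apply]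
  let a : Fin (k * l) := finProdFinEquiv (⟨0, by omega⟩, ⟨0, by omega⟩)
  let b : Fin (k * l) := finProdFinEquiv (⟨1, by omega⟩, ⟨0, by omega⟩)
  let d : Fin (k * l) := finProdFinEquiv (⟨1, by omega⟩, ⟨1, by omega⟩)
  have hta : typ a = ⟨0, by omega⟩ := hty _ _
  have htb : typ b = ⟨1, by omega⟩ := hty _ _
  have htd : typ d = ⟨1, by omega⟩ := hty _ _
  have hab : typ a ≠ typ b := by rw [hta, htb]; simp
  have had : typ d ≠ typ a := by rw [hta, htd]; simp
  have hbd : d ≠ b := by simp [b, d]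
  let T : Finset (Fin (k * l)) := Finset.univ.filter fun i => typ i = typ a
  have hbT : b ∉ T := by simpa [T] using hab.symm
  have haT : a ∈ T := by simp [T]
  have hT : T.card = l := by
    have := hc (typ a)
    rwa [Nat.card_eq_fintype_card, Fintype.card_subtype] at this
  let st := insert b T
  have hkl : 2 * l ≤ k * l := Nat.mul_le_mul_right l hk
  have hasg : ∀ x ∈ st, (gm k l typ st).IsAssignment (cfg x) := by
    intro x hx
    refine ⟨cfg_inj x, fun i hi => ?_⟩
    have : i ≠ x := by rintro rfl; exact hi hx
    simp [cfg, this, gm]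
  have hv : (gm k l typ st).SW (cfg b) = ((l : ℚ) - 1) / ((k : ℚ) * l - 1) := by
    change ∑ i ∈ insert b T, _ = _
    rw [Finset.sum_insert hbT, util_center hl typ st hc _ b (cfg_zero b), Finset.sum_eq_zero, add_zero]
    intro i hi
    have hi' : typ i = typ a := by simpa [T] using hi
    refine util_zero _ _ _ _ ?_ ?_
    · rw [Ne, cfg_zero]; rintro rfl; exact hbT hi
    · intro j hj
      rw [(cfg_zero b j).1 hj, hi']; exact hab
  have hw : (gm k l typ st).SW (cfg a) = ((l : ℚ) - 1) + ((l : ℚ) - 1) / ((k : ℚ) * l - 1) := by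
    change ∑ i ∈ insert b T, _ = _
    rw [Finset.sum_insert hbT, ← Finset.sum_erase_add _ _ haT,
      util_center hl typ st hc _ a (cfg_zero a), util_zero, zero_add]
    · congr 1
      rw [Finset.sum_congr rfl (g := fun _ => (1 : ℚ))]
      · rw [Finset.sum_const, Finset.card_erase_of_mem haT, hT, nsmul_eq_mul, mul_one,
          Nat.cast_sub (by omega)]
        simp
      · intro i hi
        rw [Finset.mem_erase] at hi
        exact util_one _ _ _ _ a (cfg_zero a) hi.1 (by simpa [T] using hi.2)
    · rw [Ne, cfg_zero]; intro h; exact hab (by rw [h])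
    · intro j hj
      rw [(cfg_zero a j).1 hj]; exact hab.symm
  have hkq : (2 : ℚ) ≤ k := by exact_mod_cast hk
  have hlq : (2 : ℚ) ≤ l := by exact_mod_cast hl
  have hden : (0 : ℚ) < (k : ℚ) * l - 1 := by nlinarith
  have hpos : 0 < ((l : ℚ) - 1) / ((k : ℚ) * l - 1) := div_pos (by linarith) hden
  have hlt : ((l : ℚ) - 1) / ((k : ℚ) * l - 1) < 1 / (k : ℚ) := by
    rw [div_lt_div_iff₀ hden (by linarith)]
    nlinarith
  refine ⟨gm k l typ st, typ, ⟨?_, ?_, ?_⟩, ⟨fun i j => Iff.rfl, ?_⟩, hc, ⟨b, by simp [gm, st]⟩, ?_,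
    ⟨0, fun _ _ => Iff.rfl⟩, cfg b, cfg a, ⟨hasg b (by simp [st]), ?_⟩, ?_,
    hasg a (by simp [st, T]), ?_, ?_⟩
  · rw [Fintype.card_fin]; omega
  · simp
  · exact (Fin.succ_injective _).injOn
  · intro c
    exact ⟨finProdFinEquiv (c, ⟨0, by omega⟩), hty _ _⟩
  · intro h
    have : d ∈ (gm k l typ st).strategic := by rw [h]; simp
    have : d ∈ insert b T := this
    simp [T, hbd, had] at this
  · intro i hi z hz
    have hz0 : z ≠ 0 := fun e => hz b (((cfg_zero b b).2 rfl).trans e.symm)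
    refine le_of_eq_of_le (util_zero _ _ _ _ (by simpa using hz0) ?_) (util_nonneg' _ _ _)
    intro j hj
    by_cases hji : j = i
    · subst hji
      simp at hj
      exact absurd hj hz0
    · rw [Function.update_of_ne hji] at hj
      have hjb := (cfg_zero b j).1 hj
      subst hjb
      have hi : i ∈ insert b T := hi
      rcases Finset.mem_insert.1 hi with h | h
      · exact absurd h.symm hji
      · have : typ i = typ a := by simpa [T] using h
        rw [this]; exact hab
  · rw [hv]; exact hlt
  · rw [hw]; linarith
  · rw [hv, hw]
    rw [lt_div_iff₀ (by linarith)] at hlt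
    rw [Nat.cast_mul, Nat.cast_sub (by omega), Nat.cast_one]
    nlinarith
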